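/- arXiv:2204.10241 — 13 statements merged into one kernel-verified Lean document; each statement's English description precedes it below -/
import Mathlib

section
/- A finite two-person game form g : X × Y → O is tight if and only if for every response strategy φ : X → Y of Bob there exists a strategy y ∈ Y whose support g(y) = {g(x,y) : x ∈ X} is contained in the image {g(x, φ(x)) : x ∈ X} of the graph of φ. -/
/-- A finite two-person game form `g : X × Y → O` is *tight* if for every pair of
response strategies `φ : X → Y` (of Bob) and `ψ : Y → X` (of Alice), the images of
their graphs intersect. -/
def GameForm.Tight {X Y O : Type*} (g : X → Y → O) : Prop :=
  ∀ (φ : X → Y) (ψ : Y → X), ∃ (x : X) (y : Y), g x (φ x) = g (ψ y) y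

/-- A game form is tight iff for every response strategy `φ : X → Y` of Bob there is a
strategy `y ∈ Y` whose support `{g x y : x ∈ X}` is contained in the image
`{g x (φ x) : x ∈ X}` of the graph of `φ`. -/
theorem tight_iff_forall_bobResponse_exists_dominated_column
    {X Y O : Type*} [Fintype X] [Fintype Y] [Fintype O] [Nonempty X] [Nonempty Y]
    (g : X → Y → O) :
    GameForm.Tight g ↔
      ∀ φ : X → Y, ∃ y : Y,
        (Set.range fun x => g x y) ⊆ Set.range fun x => g x (φ x) := by
  constructor
  · intro h φ
    by_contra! hc
    -- If no column support lies in the image of `φ`, Alice can answer each `y` with an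
    -- outcome outside that image, and this `ψ` contradicts tightness.
    have hesc : ∀ y, ∃ x, g x y ∉ Set.range fun x => g x (φ x) := fun y => by
      obtain ⟨_, ⟨x, rfl⟩, hx⟩ := Set.not_subset.mp (hc y)
      exact ⟨x, hx⟩
    choose ψ hψ using hesc
    obtain ⟨x, y, hxy⟩ := h φ ψ
    exact hψ y ⟨x, hxy⟩
  · intro h φ ψ
    obtain ⟨y, hy⟩ := h φ
    obtain ⟨x, hx⟩ := hy ⟨ψ y, rfl⟩
    exact ⟨x, y, hx⟩
end

section
/- A finite two-person game form g : X × Y → O is tight if and only if for every response strategy ψ : Y → X of Alice there exists a strategy x ∈ X whose support g(x) = {g(x,y) : y ∈ Y} is contained in the image {g(ψ(y), y) : y ∈ Y} of the graph of ψ. -/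
/-- A game form is tight iff for every response strategy `ψ : Y → X` of Alice there is a
strategy `x ∈ X` whose support `{g x y : y ∈ Y}` is contained in the image
`{g (ψ y) y : y ∈ Y}` of the graph of `ψ`. -/
theorem tight_iff_forall_aliceResponse_exists_dominated_row
    {X Y O : Type*} [Fintype X] [Fintype Y] [Fintype O] [Nonempty X] [Nonempty Y]
    (g : X → Y → O) :
    GameForm.Tight g ↔
      ∀ ψ : Y → X, ∃ x : X,
        (Set.range fun y => g x y) ⊆ Set.range fun y => g (ψ y) y := by
  constructor
  · intro h ψ
    by_contra! hc
    -- If every row leaves the image of `ψ`, Bob can always answer outside it.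
    have hout : ∀ x, ∃ y, g x y ∉ Set.range fun y => g (ψ y) y := by
      intro x
      obtain ⟨_, ⟨y, rfl⟩, hy⟩ := Set.not_subset.mp (hc x)
      exact ⟨y, hy⟩
    choose φ hφ using hout
    obtain ⟨x, y, hxy⟩ := h φ ψ
    exact hφ x ⟨y, hxy.symm⟩
  · intro h φ ψ
    obtain ⟨x, hx⟩ := h ψ
    obtain ⟨y, hy⟩ := hx ⟨φ x, rfl⟩
    exact ⟨x, y, hy.symm⟩
end

section
/- A finite two-person game form g : X × Y → O is tight if and only if the two hypergraphs of supports are dual, that is, both of the following hold: (A) for every subset O_A ⊆ O that intersects the support g(y) of every y ∈ Y there exists x ∈ X with g(x) ⊆ O_A; and (B) for every subset O_B ⊆ O that intersects the support g(x) of every x ∈ X there exists y ∈ Y with g(y) ⊆ O_B. -/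
/-- A game form is tight iff the two hypergraphs of supports are dual:
(A) every set of outcomes meeting all column supports contains a row support, and
(B) every set of outcomes meeting all row supports contains a column support. -/
theorem tight_iff_dual_hypergraphs
    {X Y O : Type*} [Fintype X] [Fintype Y] [Fintype O] [Nonempty X] [Nonempty Y]
    (g : X → Y → O) :
    GameForm.Tight g ↔
      ((∀ OA : Set O, (∀ y : Y, ∃ x : X, g x y ∈ OA) →
          ∃ x : X, (Set.range fun y => g x y) ⊆ OA) ∧
       (∀ OB : Set O, (∀ x : X, ∃ y : Y, g x y ∈ OB) →
          ∃ y : Y, (Set.range fun x => g x y) ⊆ OB)) := by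
  constructor
  · intro h
    constructor
    · intro OA hOA
      choose ψ hψ using hOA
      by_contra! hcon
      -- If no row support lies in `OA`, Bob can answer every `x` outside `OA`, while Alice
      -- answers every `y` inside `OA`, so the two response images are disjoint.
      have hφ : ∀ x, ∃ y, g x y ∉ OA := fun x => by
        simpa [Set.range_subset_iff] using hcon x
      choose φ hφ using hφ
      obtain ⟨x, y, hxy⟩ := h φ ψ
      exact hφ x (hxy ▸ hψ y)
    · intro OB hOB
      choose φ hφ using hOB
      by_contra! hcon
      have hψ : ∀ y, ∃ x, g x y ∉ OB := fun y => by
        simpa [Set.range_subset_iff] using hcon y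
      choose ψ hψ using hψ
      obtain ⟨x, y, hxy⟩ := h φ ψ
      exact hψ y (hxy ▸ hφ x)
  · rintro ⟨hA, -⟩ φ ψ
    -- The image of Alice's response meets every column support, so it contains the support of
    -- some row `x`, in particular the outcome `g x (φ x)`.
    obtain ⟨x, hx⟩ := hA (Set.range fun y => g (ψ y) y) fun y => ⟨ψ y, y, rfl⟩
    obtain ⟨y, hy⟩ := hx ⟨φ x, rfl⟩
    exact ⟨x, y, hy.symm⟩
end

section
/- If a finite two-person game form g : X × Y → O is win-lose-solvable, then g is tight. Equivalently (contrapositive): if g is not tight, then there exists a function r : O → {-1, 1} such that the zero-sum game in which Alice receives r(g(x,y)) and Bob receives -r(g(x,y)) has no saddle point, i.e., there is no pair (x,y) with r(g(x',y)) ≤ r(g(x,y)) ≤ r(g(x,y')) for all x' ∈ X and y' ∈ Y. -/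
/-- If a game form is win-lose-solvable (every `±1`-valued zero-sum game on it has a
saddle point, Alice maximizing `r` and Bob minimizing `r`), then it is tight. -/
theorem tight_of_winLoseSolvable
    {X Y O : Type*} [Fintype X] [Fintype Y] [Fintype O] [Nonempty X] [Nonempty Y]
    (g : X → Y → O)
    (hsolv : ∀ r : O → ℝ, (∀ o : O, r o = -1 ∨ r o = 1) →
      ∃ (x : X) (y : Y),
        (∀ x' : X, r (g x' y) ≤ r (g x y)) ∧ (∀ y' : Y, r (g x y) ≤ r (g x y'))) :
    GameForm.Tight g := by
  classical
  intro φ ψ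
  by_contra! hne
  -- Alice loses exactly on the outcomes that Bob's response `φ` can produce.
  obtain ⟨x, y, hx, hy⟩ := hsolv (fun o => if ∃ x, g x (φ x) = o then -1 else 1)
    (fun o => by by_cases h : ∃ x, g x (φ x) = o <;> simp [h])
  -- At a saddle point `φ` forces the value to be at most `-1`, and `ψ` at least `1`.
  have h1 := hx (ψ y)
  have h2 := hy (φ x)
  have hψ : ¬ ∃ x', g x' (φ x') = g (ψ y) y := fun ⟨x', h⟩ => hne x' y h
  have hφ : ∃ x', g x' (φ x') = g x (φ x) := ⟨x, rfl⟩
  simp only [if_neg hψ] at h1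
  simp only [if_pos hφ] at h2
  linarith
end

section
/- If a finite two-person game form g : X × Y → O is tight, then g is zero-sum-solvable: for every reward function r : O → ℝ there exists a pair (x,y) ∈ X × Y with r(g(x',y)) ≤ r(g(x,y)) ≤ r(g(x,y')) for all x' ∈ X and y' ∈ Y. -/
/-- If a game form is tight then it is zero-sum-solvable: for every reward `r : O → ℝ`
the zero-sum game (Alice maximizes `r`, Bob minimizes `r`) has a saddle point. -/
theorem zeroSumSolvable_of_tight
    {X Y O : Type*} [Fintype X] [Fintype Y] [Fintype O] [Nonempty X] [Nonempty Y]
    (g : X → Y → O) (htight : GameForm.Tight g) :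
    ∀ r : O → ℝ, ∃ (x : X) (y : Y),
      (∀ x' : X, r (g x' y) ≤ r (g x y)) ∧ (∀ y' : Y, r (g x y) ≤ r (g x y')) := by
  intro r
  choose φ hφ using fun x => Finite.exists_min fun y => r (g x y)
  choose ψ hψ using fun y => Finite.exists_max fun x => r (g x y)
  obtain ⟨x₀, hx₀⟩ := Finite.exists_max fun x => r (g x (φ x))
  obtain ⟨y₀, hy₀⟩ := Finite.exists_min fun y => r (g (ψ y) y)
  have hminimax : r (g (ψ y₀) y₀) ≤ r (g x₀ (φ x₀)) := by
    obtain ⟨x, y, hxy⟩ := htight φ ψ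
    calc r (g (ψ y₀) y₀) ≤ r (g (ψ y) y) := hy₀ y
      _ = r (g x (φ x)) := by rw [hxy]
      _ ≤ r (g x₀ (φ x₀)) := hx₀ x
  exact ⟨x₀, y₀,
    fun x' => (hψ y₀ x').trans (hminimax.trans (hφ x₀ y₀)),
    fun y' => (hψ y₀ x₀).trans (hminimax.trans (hφ x₀ y'))⟩
end

section
/- If a finite two-person game form g : X × Y → O is tight, then g is Nash-solvable: for every pair of reward functions r^A : O → ℝ and r^B : O → ℝ there exists a Nash equilibrium, i.e., a pair (x,y) ∈ X × Y with r^A(g(x,y)) ≥ r^A(g(x',y)) for all x' ∈ X and r^B(g(x,y)) ≥ r^B(g(x,y')) for all y' ∈ Y. -/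
/-- A tight game form is determined: each set of outcomes can be forced by Alice, or its
complement by Bob. -/
theorem GameForm.Tight.effective {X Y O : Type*} {g : X → Y → O} (h : GameForm.Tight g)
    (S : O → Prop) : (∃ x, ∀ y, S (g x y)) ∨ (∃ y, ∀ x, ¬ S (g x y)) := by
  by_contra! hc
  obtain ⟨h1, h2⟩ := hc
  choose φ hφ using h1
  choose ψ hψ using h2
  obtain ⟨x, y, hxy⟩ := h φ ψ
  exact hφ x (hxy ▸ hψ y)

open Classical in
/-- The weight `(|O| + 1) ^ k` of an outcome `o`, where `k` is the number of outcomes strictly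
better than `o`; it exceeds the total weight of all those better outcomes. -/
noncomputable def GameForm.weight {O : Type*} [Fintype O] (r : O → ℝ) (o : O) : ℕ :=
  (Fintype.card O + 1) ^ (Finset.univ.filter fun o' => r o < r o').card

theorem GameForm.card_mul_weight_le {O : Type*} [Fintype O] (r : O → ℝ) {o o' : O}
    (h : r o < r o') :
    (Fintype.card O + 1) * GameForm.weight r o' ≤ GameForm.weight r o := by
  classical
  unfold GameForm.weight
  rw [← pow_succ']
  refine Nat.pow_le_pow_right (Nat.succ_pos _) (Finset.card_lt_card ?_)
  rw [Finset.ssubset_iff_of_subset]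
  · exact ⟨o', by simpa using h, by simp⟩
  · intro p hp
    simp only [Finset.mem_filter, Finset.mem_univ, true_and] at hp ⊢
    exact h.trans hp

/-- Removing `o` from a set of outcomes and adding only strictly better ones decreases the total
weight. -/
theorem GameForm.weight_lt {O : Type*} [Fintype O] (r : O → ℝ) {o : O} {S T : Finset O}
    (ho : o ∈ S) (hT : ∀ p ∈ T, r o < r p ∨ (p ∈ S ∧ p ≠ o)) :
    ∑ p ∈ T, GameForm.weight r p < ∑ p ∈ S, GameForm.weight r p := by
  classical
  set B : Finset O := Finset.univ.filter fun p => r o < r p with hB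
  have hsub : T ⊆ B ∪ S.erase o := by
    intro p hp
    rcases hT p hp with h | h
    · exact Finset.mem_union_left _ (by simpa [hB] using h)
    · exact Finset.mem_union_right _ (Finset.mem_erase.2 ⟨h.2, h.1⟩)
  have h1 : ∑ p ∈ T, weight r p ≤ ∑ p ∈ B, weight r p + ∑ p ∈ S.erase o, weight r p :=
    (Finset.sum_le_sum_of_subset hsub).trans <| by
      rw [← Finset.sum_union_inter]
      exact Nat.le_add_right _ _
  have h2 : ∑ p ∈ B, weight r p < weight r o := by
    have hpos : 0 < weight r o := pow_pos (Nat.succ_pos _) _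
    have h3 : (Fintype.card O + 1) * ∑ p ∈ B, weight r p ≤ Fintype.card O * weight r o := by
      rw [Finset.mul_sum]
      calc ∑ p ∈ B, (Fintype.card O + 1) * weight r p ≤ ∑ _p ∈ B, weight r o :=
            Finset.sum_le_sum fun p hp => card_mul_weight_le r (by simpa [hB] using hp)
        _ = B.card * weight r o := by simp
        _ ≤ Fintype.card O * weight r o := Nat.mul_le_mul_right _ (Finset.card_le_univ B)
    by_contra! hc
    nlinarith [Nat.mul_le_mul_left (Fintype.card O + 1) hc]
  have h4 := Finset.sum_erase_add S (weight r) ho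
  omega

/-- If a game form is tight then it is Nash-solvable: for every pair of reward functions
`rA rB : O → ℝ` (both players maximize their own reward) there is a Nash equilibrium. -/
theorem nashSolvable_of_tight
    {X Y O : Type*} [Fintype X] [Fintype Y] [Fintype O] [Nonempty X] [Nonempty Y]
    (g : X → Y → O) (htight : GameForm.Tight g) :
    ∀ rA rB : O → ℝ, ∃ (x : X) (y : Y),
      (∀ x' : X, rA (g x' y) ≤ rA (g x y)) ∧ (∀ y' : Y, rB (g x y') ≤ rB (g x y)) := by
  classical
  intro rA rB
  let R : X → Finset O := fun x => Finset.univ.image (g x)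
  have hR : ∀ x y, g x y ∈ R x := fun x y => Finset.mem_image_of_mem _ (Finset.mem_univ y)
  obtain ⟨x, hx⟩ := Finite.exists_min fun x => ∑ p ∈ R x, GameForm.weight rA p
  obtain ⟨y₀, hy₀⟩ := Finite.exists_max fun y => rB (g x y)
  rcases htight.effective fun p => rA (g x y₀) < rA p ∨ (p ∈ R x ∧ p ≠ g x y₀) with
    ⟨x', hx'⟩ | ⟨y, hy⟩
  · refine absurd (GameForm.weight_lt rA (hR x y₀) (T := R x') fun p hp => ?_) (hx x').not_gt
    obtain ⟨y, -, rfl⟩ := Finset.mem_image.1 hp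
    exact hx' y
  · have hxy : g x y = g x y₀ := by
      by_contra hne
      exact hy x (Or.inr ⟨hR x y, hne⟩)
    refine ⟨x, y, fun x' => ?_, fun y' => ?_⟩
    · rw [hxy]
      exact not_lt.1 fun h => hy x' (Or.inl h)
    · rw [hxy]
      exact hy₀ y'
end

section
/- For a finite two-person game form g : X × Y → O the following four properties are equivalent: (i) g is Nash-solvable; (ii) g is zero-sum-solvable; (iii) g is win-lose-solvable; (iv) g is tight. -/
/-- `g` is Nash-solvable: every game `(g, rA, rB)` with both players maximizing
has a Nash equilibrium. -/
def GameForm.NashSolvable {X Y O : Type*} (g : X → Y → O) : Prop :=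
  ∀ rA rB : O → ℝ, ∃ (x : X) (y : Y),
    (∀ x' : X, rA (g x' y) ≤ rA (g x y)) ∧ (∀ y' : Y, rB (g x y') ≤ rB (g x y))

/-- `g` is zero-sum-solvable: for every reward `r : O → ℝ` the zero-sum game
(Alice maximizes `r`, Bob minimizes `r`) has a saddle point. -/
def GameForm.ZeroSumSolvable {X Y O : Type*} (g : X → Y → O) : Prop :=
  ∀ r : O → ℝ, ∃ (x : X) (y : Y),
    (∀ x' : X, r (g x' y) ≤ r (g x y)) ∧ (∀ y' : Y, r (g x y) ≤ r (g x y'))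

/-- `g` is win-lose-solvable: the same for every `±1`-valued reward. -/
def GameForm.WinLoseSolvable {X Y O : Type*} (g : X → Y → O) : Prop :=
  ∀ r : O → ℝ, (∀ o : O, r o = -1 ∨ r o = 1) →
    ∃ (x : X) (y : Y),
      (∀ x' : X, r (g x' y) ≤ r (g x y)) ∧ (∀ y' : Y, r (g x y) ≤ r (g x y'))

/-- A tight game form is determined: for each set `S` of outcomes Alice can force `S` or Bob can
force its complement. -/
theorem GameForm.Tight.row_or_column {X Y O : Type*} {g : X → Y → O} (hg : GameForm.Tight g)
    (S : Set O) : (∃ x, ∀ y, g x y ∈ S) ∨ (∃ y, ∀ x, g x y ∉ S) := by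
  by_contra! h
  choose φ hφ using h.1
  choose ψ hψ using h.2
  obtain ⟨x, y, hxy⟩ := hg φ ψ
  exact hφ x (hxy ▸ hψ y)

/-- Positive weights for which each outcome outweighs all strictly better outcomes together. -/
theorem exists_safety_weight {O : Type*} [Fintype O] (r : O → ℝ) :
    ∃ w : O → ℕ, ∀ a, ∑ o with r a < r o, w o < w a := by
  classical
  -- The exponent of the weight is the number of strictly better outcomes.
  let rank : O → ℕ := fun a => (Finset.univ.filter fun o => r a < r o).card
  let n := Fintype.card O
  refine ⟨fun a => (n + 1) ^ rank a, fun a => ?_⟩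
  have hrank : ∀ o, r a < r o → rank o < rank a := by
    intro o ho
    refine Finset.card_lt_card (Finset.ssubset_iff_of_subset ?_ |>.2 ⟨o, by simpa using ho, by simp⟩)
    intro p hp
    simp only [Finset.mem_filter, Finset.mem_univ, true_and] at hp ⊢
    exact ho.trans hp
  have hsum : (n + 1) * ∑ o with r a < r o, (n + 1) ^ rank o ≤ n * (n + 1) ^ rank a := by
    rw [Finset.mul_sum]
    calc ∑ o with r a < r o, (n + 1) * (n + 1) ^ rank o
        ≤ ∑ o with r a < r o, (n + 1) ^ rank a := by
          refine Finset.sum_le_sum fun o ho => ?_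
          rw [← pow_succ']
          exact Nat.pow_le_pow_right (by omega) (hrank o (by simpa using ho))
      _ ≤ n * (n + 1) ^ rank a := by
          rw [Finset.sum_const, smul_eq_mul]
          exact Nat.mul_le_mul_right _ (Finset.card_le_univ _)
  have hpos : 0 < (n + 1) ^ rank a := by positivity
  by_contra! hle
  have := Nat.mul_le_mul_left (n + 1) hle
  nlinarith

theorem GameForm.Tight.nashSolvable {X Y O : Type*} [Fintype X] [Fintype Y] [Fintype O]
    [Nonempty X] [Nonempty Y] {g : X → Y → O} (hg : GameForm.Tight g) :
    GameForm.NashSolvable g := by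
  classical
  intro rA rB
  obtain ⟨w, hw⟩ := exists_safety_weight rA
  let row : X → Finset O := fun x => Finset.univ.image (g x)
  obtain ⟨x, hx⟩ := Finite.exists_min fun x => ∑ o ∈ row x, w o
  obtain ⟨y₀, hy₀⟩ := Finite.exists_max fun y => rB (g x y)
  set a := g x y₀ with ha
  have ha_mem : a ∈ row x := Finset.mem_image_of_mem _ (Finset.mem_univ _)
  rcases hg.row_or_column {o | (o ∈ row x ∧ o ≠ a) ∨ rA a < rA o} with ⟨x', hx'⟩ | ⟨y, hy⟩
  · -- Row `x'` lacks `a` and gains only outcomes better than `a`, so its weight is smaller.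
    exfalso
    have hsub : row x' ⊆ (row x).erase a ∪ Finset.univ.filter fun o => rA a < rA o := by
      intro o ho
      obtain ⟨y, -, rfl⟩ := Finset.mem_image.1 ho
      have := hx' y
      simp only [Set.mem_ofPred_eq] at this
      simp only [Finset.mem_union, Finset.mem_erase, Finset.mem_filter, Finset.mem_univ, true_and]
      tauto
    have h₁ : ∑ o ∈ row x', w o ≤ ∑ o ∈ (row x).erase a, w o + ∑ o with rA a < rA o, w o :=
      (Finset.sum_le_sum_of_subset hsub).trans
        (by rw [← Finset.sum_union_inter]; exact Nat.le_add_right _ _)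
    have h₂ := Finset.sum_erase_add (row x) w ha_mem
    have h₃ := hx x'
    have h₄ := hw a
    omega
  · have hxy : g x y = a := by
      by_contra hne
      exact hy x (Or.inl ⟨Finset.mem_image_of_mem _ (Finset.mem_univ _), hne⟩)
    refine ⟨x, y, fun x' => ?_, fun y' => ?_⟩
    · rw [hxy]
      exact not_lt.1 fun h => hy x' (Or.inr h)
    · rw [hxy]
      exact hy₀ y'

theorem GameForm.WinLoseSolvable.tight {X Y O : Type*} {g : X → Y → O}
    (hg : GameForm.WinLoseSolvable g) : GameForm.Tight g := by
  classical
  intro φ ψ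
  by_contra! hne
  obtain ⟨x, y, hA, hB⟩ := hg (fun o => if ∃ x, g x (φ x) = o then -1 else 1)
    (fun o => by by_cases h : ∃ x, g x (φ x) = o <;> simp [h])
  have h₁ := (hA (ψ y)).trans (hB (φ x))
  rw [if_neg (by rintro ⟨x', h⟩; exact hne x' y h), if_pos ⟨x, rfl⟩] at h₁
  norm_num at h₁

/-- For a finite two-person game form, Nash-solvability, zero-sum-solvability,
win-lose-solvability, and tightness are all equivalent. -/
theorem gameForm_solvability_tfae
    {X Y O : Type*} [Fintype X] [Fintype Y] [Fintype O] [Nonempty X] [Nonempty Y]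
    (g : X → Y → O) :
    [GameForm.NashSolvable g, GameForm.ZeroSumSolvable g,
     GameForm.WinLoseSolvable g, GameForm.Tight g].TFAE := by
  tfae_have 1 → 2 := by
    intro h r
    obtain ⟨x, y, hA, hB⟩ := h r (-r)
    exact ⟨x, y, hA, fun y' => neg_le_neg_iff.1 (hB y')⟩
  tfae_have 2 → 3 := fun h r _ => h r
  tfae_have 3 → 4 := GameForm.WinLoseSolvable.tight
  tfae_have 4 → 1 := GameForm.Tight.nashSolvable
  tfae_finish
end

section
/- A finite two-person vector game form (v-form) g_v : X × Y → W ⊂ ℝ^m is tight if and only if it is zero-sum-solvable: for every utility vector u ∈ ℝ^m, the zero-sum game in which Alice maximizes and Bob minimizes the scalar product ⟨u, g_v(x,y)⟩ has a saddle point, i.e., a pair (x,y) with ⟨u, g_v(x',y)⟩ ≤ ⟨u, g_v(x,y)⟩ ≤ ⟨u, g_v(x,y')⟩ for all x' ∈ X and y' ∈ Y. -/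
/-!
If `g` is tight and `u` is given, take for `φ` and `ψ` best responses (Bob minimizing, Alice
maximizing `⟨u, g x y⟩`). On a common point of the two convex hulls, `⟨u, ·⟩` is at most
`max_x min_y ⟨u, g x y⟩` and at least `min_y max_x ⟨u, g x y⟩`, so minimax ≤ maximin, and optimal
pure strategies of the two players form a saddle point.

Conversely, if the hulls for some `φ`, `ψ` are disjoint, the separation theorem for compact convex
sets gives `u` with `⟨u, g x (φ x)⟩ < ⟨u, g (ψ y) y⟩` for all `x`, `y`. A saddle point `(x, y)`
contradicts this, as `⟨u, g (ψ y) y⟩ ≤ ⟨u, g x y⟩ ≤ ⟨u, g x (φ x)⟩`.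
-/

/-- A vector game form (`v`-form) `g : X × Y → ℝ^m` is *tight* if for every pair of
response strategies `φ : X → Y` and `ψ : Y → X` the convex hulls of the images of
their graphs intersect. -/
def VForm.Tight {X Y ι : Type*} (g : X → Y → (ι → ℝ)) : Prop :=
  ∀ (φ : X → Y) (ψ : Y → X),
    ((convexHull ℝ (Set.range fun x => g x (φ x))) ∩
     (convexHull ℝ (Set.range fun y => g (ψ y) y))).Nonempty

theorem isLinearMap_sum_mul {m : ℕ} (u : Fin m → ℝ) :
    IsLinearMap ℝ (fun v : Fin m → ℝ => ∑ i, u i * v i) :=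
  ⟨fun v w => dotProduct_add u v w, fun c v => dotProduct_smul c u v⟩

/-- A finite two-person `v`-form is tight iff it is zero-sum-solvable: for every
utility vector `u ∈ ℝ^m`, the zero-sum game with payoff `⟨u, g x y⟩` (Alice maximizes,
Bob minimizes) has a saddle point. -/
theorem vForm_tight_iff_zeroSumSolvable
    {X Y : Type*} {m : ℕ} [Fintype X] [Fintype Y] [Nonempty X] [Nonempty Y]
    (g : X → Y → (Fin m → ℝ)) :
    VForm.Tight g ↔
      ∀ u : Fin m → ℝ, ∃ (x : X) (y : Y),
        (∀ x' : X, ∑ i, u i * g x' y i ≤ ∑ i, u i * g x y i) ∧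
        (∀ y' : Y, ∑ i, u i * g x y i ≤ ∑ i, u i * g x y' i) := by
  constructor
  · intro hT u
    choose φ hφ using fun x => Finite.exists_min fun y => ∑ i, u i * g x y i
    choose ψ hψ using fun y => Finite.exists_max fun x => ∑ i, u i * g x y i
    obtain ⟨x₀, hx₀⟩ := Finite.exists_max fun x => ∑ i, u i * g x (φ x) i
    obtain ⟨y₀, hy₀⟩ := Finite.exists_min fun y => ∑ i, u i * g (ψ y) y i
    obtain ⟨p, hp₁, hp₂⟩ := hT φ ψ
    have hle : ∑ i, u i * p i ≤ ∑ i, u i * g x₀ (φ x₀) i :=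
      convexHull_min (Set.range_subset_iff.2 hx₀)
        (convex_halfSpace_le (isLinearMap_sum_mul u) _) hp₁
    have hge : ∑ i, u i * g (ψ y₀) y₀ i ≤ ∑ i, u i * p i :=
      convexHull_min (t := {v : Fin m → ℝ | ∑ i, u i * g (ψ y₀) y₀ i ≤ ∑ i, u i * v i})
        (Set.range_subset_iff.2 hy₀)
        (convex_halfSpace_ge (isLinearMap_sum_mul u) _) hp₂
    have hminimax := hge.trans hle
    exact ⟨x₀, y₀,
      fun x' => (hψ y₀ x').trans (hminimax.trans (hφ x₀ y₀)),
      fun y' => (hψ y₀ x₀).trans (hminimax.trans (hφ x₀ y'))⟩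
  · intro hS φ ψ
    rw [← Set.not_disjoint_iff_nonempty_inter]
    intro hdisj
    obtain ⟨f, a, b, ha, hab, hb⟩ := geometric_hahn_banach_compact_closed
      (convex_convexHull ℝ _) ((Set.finite_range _).isCompact_convexHull ℝ)
      (convex_convexHull ℝ _) ((Set.finite_range _).isClosed_convexHull ℝ) hdisj
    -- The separating functional is the scalar product with its values on the standard basis.
    have hf : ∀ v : Fin m → ℝ, f v = ∑ i, f (Pi.single i 1) * v i := by
      intro v
      have h := LinearMap.pi_apply_eq_sum_univ f.toLinearMap v
      simpa [← Pi.single_apply, mul_comm, Pi.single_comm] using h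
    obtain ⟨x, y, hx, hy⟩ := hS fun i => f (Pi.single i 1)
    have h₁ := ha _ (subset_convexHull ℝ _ (Set.mem_range_self x))
    have h₂ := hb _ (subset_convexHull ℝ _ (Set.mem_range_self y))
    have h₃ := hx (ψ y)
    have h₄ := hy (φ x)
    rw [← hf, ← hf] at h₃ h₄
    linarith
end

section
/- If a weakly rectangular v⁺-form g⁺_v is tight, then it is Nash-solvable: for every pair of strictly positive cost vectors u^A, u^B ∈ ℝ^m the game (g⁺_v, u^A, u^B), in which each player minimizes his/her extended-real effective cost, has a Nash equilibrium (x,y), i.e., r^A(x,y) ≤ r^A(x',y) for all x' ∈ X and r^B(x,y) ≤ r^B(x,y') for all y' ∈ Y. -/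
/-! Take best responses `φ` of Bob to `uB` and `ψ` of Alice to `uA`; they exist by finiteness.
Tightness gives `x`, `y` with a common outcome `g x (φ x) = g (ψ y) y`. Then `(x, y)` has the same
outcome: by weak rectangularity if it is a vector, and because row `x` is constantly `w^c` if even
Bob's best response there yields `w^c`. Hence `y` does as well as the best response `φ x`
against `x`, and `x` as well as `ψ y` against `y`. -/

/-! A `v⁺`-form is modeled as `g : X → Y → Option (Fin m → ℝ)`, where `some w`
means the outcome is the vector `w ∈ W ⊂ ℝ^m` and `none` stands for the special
outcome `w^c` (the vector all of whose coordinates are `+∞`). -/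

/-- The effective cost of an outcome with respect to a local cost vector `u`:
the scalar product `⟨u, w⟩` for a vector outcome `w`, and `+∞` for `w^c`. -/
noncomputable def effCost {m : ℕ} (u : Fin m → ℝ) : Option (Fin m → ℝ) → EReal
  | none => ⊤
  | some w => ((∑ i, u i * w i : ℝ) : EReal)

/-- All vector outcomes of the `v⁺`-form are coordinatewise nonnegative and nonzero. -/
def IsVPlusForm {X Y : Type*} {m : ℕ} (g : X → Y → Option (Fin m → ℝ)) : Prop :=
  ∀ (x : X) (y : Y) (w : Fin m → ℝ), g x y = some w → (∀ i, 0 ≤ w i) ∧ w ≠ 0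

/-- The `v⁺`-form is weakly rectangular: the preimage of each vector `w ∈ W` is a box. -/
def WeaklyRectangular {X Y : Type*} {m : ℕ} (g : X → Y → Option (Fin m → ℝ)) : Prop :=
  ∀ (w : Fin m → ℝ) (x x' : X) (y y' : Y),
    g x y = some w → g x' y' = some w → g x y' = some w

/-- `φ : X → Y` is a possibly best response (PBR) of Bob: for some strictly positive
cost vector `u^B`, `φ x` minimizes Bob's effective cost for every `x`. -/
def IsPBRBob {X Y : Type*} {m : ℕ} (g : X → Y → Option (Fin m → ℝ)) (φ : X → Y) : Prop :=
  ∃ u : Fin m → ℝ, (∀ i, 0 < u i) ∧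
    ∀ (x : X) (y : Y), effCost u (g x (φ x)) ≤ effCost u (g x y)

/-- `ψ : Y → X` is a possibly best response (PBR) of Alice. -/
def IsPBRAlice {X Y : Type*} {m : ℕ} (g : X → Y → Option (Fin m → ℝ)) (ψ : Y → X) : Prop :=
  ∃ u : Fin m → ℝ, (∀ i, 0 < u i) ∧
    ∀ (y : Y) (x : X), effCost u (g (ψ y) y) ≤ effCost u (g x y)

/-- A `v⁺`-form is *tight* if the images of the graphs of any PBR of Bob and any PBR of
Alice intersect. -/
def VPlusTight {X Y : Type*} {m : ℕ} (g : X → Y → Option (Fin m → ℝ)) : Prop :=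
  ∀ (φ : X → Y) (ψ : Y → X), IsPBRBob g φ → IsPBRAlice g ψ →
    ∃ (x : X) (y : Y), g x (φ x) = g (ψ y) y

/-- `(x, y)` is a Nash equilibrium of the game `(g, u^A, u^B)`, both players minimizing
their effective costs. -/
def IsNashEq {X Y : Type*} {m : ℕ} (g : X → Y → Option (Fin m → ℝ))
    (uA uB : Fin m → ℝ) (x : X) (y : Y) : Prop :=
  (∀ x' : X, effCost uA (g x y) ≤ effCost uA (g x' y)) ∧
  (∀ y' : Y, effCost uB (g x y) ≤ effCost uB (g x y'))

/-- If a weakly rectangular `v⁺`-form is tight then it is Nash-solvable: for all strictly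
positive cost vectors `u^A`, `u^B` the game `(g, u^A, u^B)` has a Nash equilibrium. -/
theorem nashSolvable_of_vPlusTight
    {X Y : Type*} {m : ℕ} [Fintype X] [Fintype Y] [Nonempty X] [Nonempty Y]
    (g : X → Y → Option (Fin m → ℝ)) (hform : IsVPlusForm g)
    (hrect : WeaklyRectangular g) (htight : VPlusTight g) :
    ∀ uA uB : Fin m → ℝ, (∀ i, 0 < uA i) → (∀ i, 0 < uB i) →
      ∃ (x : X) (y : Y), IsNashEq g uA uB x y := by
  intro uA uB hA hB
  choose φ hφ using fun x => Finite.exists_min (fun y => effCost uB (g x y))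
  choose ψ hψ using fun y => Finite.exists_min (fun x => effCost uA (g x y))
  obtain ⟨x, y, hxy⟩ := htight φ ψ ⟨uB, hB, hφ⟩ ⟨uA, hA, hψ⟩
  have key : g x y = g x (φ x) := by
    cases ho : g x (φ x) with
    | some w => exact hrect w x (ψ y) (φ x) y ho (hxy ▸ ho)
    | none =>
      have h := hφ x y
      cases hg : g x y with
      | none => rfl
      | some w =>
        rw [ho, hg] at h
        exact absurd (top_le_iff.mp h) (EReal.coe_ne_top _)
  refine ⟨x, y, fun x' => ?_, fun y' => ?_⟩
  · rw [key, hxy]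
    exact hψ y x'
  · rw [key]
    exact hφ x y'
end

section
/- Let g⁺_v be a tight weakly rectangular v⁺-form such that Alice has no degenerate strategy or Bob has no degenerate strategy. Then for every pair of strictly positive cost vectors u^A, u^B ∈ ℝ^m the game (g⁺_v, u^A, u^B) has a non-degenerate Nash equilibrium, i.e., a Nash equilibrium (x,y) with g⁺_v(x,y) ∈ W (so g⁺_v(x,y) ≠ w^c). -/
/-- Only `w^c` costs at least `+∞`. -/
lemma eq_none_of_effCost_none_le {m : ℕ} (u : Fin m → ℝ) {o : Option (Fin m → ℝ)}
    (h : effCost u none ≤ effCost u o) : o = none := by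
  cases o with
  | none => rfl
  | some w => exact absurd (top_le_iff.mp h) (EReal.coe_ne_top _)

/-- If a tight weakly rectangular `v⁺`-form is such that Alice has no degenerate
strategy or Bob has no degenerate strategy, then for all strictly positive cost vectors
the game has a non-degenerate Nash equilibrium (one whose outcome is a vector of `W`,
not `w^c`). -/
theorem exists_nondegenerate_nashEq_of_vPlusTight
    {X Y : Type*} {m : ℕ} [Fintype X] [Fintype Y] [Nonempty X] [Nonempty Y]
    (g : X → Y → Option (Fin m → ℝ)) (hform : IsVPlusForm g)
    (hrect : WeaklyRectangular g) (htight : VPlusTight g)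
    (hnodeg : (∀ x : X, ¬ ∀ y : Y, g x y = none) ∨ (∀ y : Y, ¬ ∀ x : X, g x y = none)) :
    ∀ uA uB : Fin m → ℝ, (∀ i, 0 < uA i) → (∀ i, 0 < uB i) →
      ∃ (x : X) (y : Y) (w : Fin m → ℝ), g x y = some w ∧ IsNashEq g uA uB x y := by
  intro uA uB hA hB
  choose φ hφ using fun x => Finite.exists_min fun y => effCost uB (g x y)
  choose ψ hψ using fun y => Finite.exists_min fun x => effCost uA (g x y)
  obtain ⟨x, y, hxy⟩ := htight φ ψ ⟨uB, hB, hφ⟩ ⟨uA, hA, hψ⟩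
  cases hw : g x (φ x) with
  | none =>
    have hx : ∀ y', g x y' = none := fun y' =>
      eq_none_of_effCost_none_le uB (hw ▸ hφ x y')
    have hy : ∀ x', g x' y = none := fun x' =>
      eq_none_of_effCost_none_le uA ((hxy.symm.trans hw) ▸ hψ y x')
    exact (hnodeg.elim (fun h => h x hx) (fun h => h y hy)).elim
  | some w =>
    have hw' : g (ψ y) y = some w := hxy.symm.trans hw
    have hg : g x y = some w := hrect w x (ψ y) (φ x) y hw hw'
    refine ⟨x, y, w, hg, fun x' => ?_, fun y' => ?_⟩
    · rw [hg, ← hw']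
      exact hψ y x'
    · rw [hg, ← hw]
      exact hφ x y'
end

section
/- Let g⁺_v be a v⁺-form, X* ⊆ X a nonempty subset, and φ', φ'' : X* → Y two mappings such that all 2|X*| vectors {g⁺_v(x, φ'(x)), g⁺_v(x, φ''(x)) : x ∈ X*} lie in W and are pairwise distinct. If the coordinatewise sum ∑_{x ∈ X*} g⁺_v(x, φ'(x)) is coordinatewise ≥ and not equal to ∑_{x ∈ X*} g⁺_v(x, φ''(x)) (i.e., strictly greater in the componentwise order), then φ' cannot be extended to a possibly best response φ : X → Y of Bob. -/
/-- Summability condition (strict inequality case): if on a nonempty subset `X* ⊆ X` two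
partial response maps `φ'` and `φ''` of Bob take vector values (all `2|X*|` of them
pairwise distinct) and the coordinatewise sum of the `φ'`-values is strictly greater
(componentwise `≥` and not equal) than that of the `φ''`-values, then `φ'` cannot be
extended to a possibly best response of Bob. -/
theorem not_extendable_to_PBR_of_sum_gt
    {X Y : Type*} {m : ℕ} [Fintype X] [Fintype Y] [Nonempty X] [Nonempty Y]
    (g : X → Y → Option (Fin m → ℝ)) (hform : IsVPlusForm g)
    (Xs : Finset X) (hne : Xs.Nonempty)
    (φ' φ'' : X → Y) (w₁ w₂ : X → Fin m → ℝ)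
    (h₁ : ∀ x ∈ Xs, g x (φ' x) = some (w₁ x))
    (h₂ : ∀ x ∈ Xs, g x (φ'' x) = some (w₂ x))
    (hdist : ∀ x ∈ Xs, ∀ x' ∈ Xs,
      (w₁ x = w₁ x' → x = x') ∧ (w₂ x = w₂ x' → x = x') ∧ w₁ x ≠ w₂ x')
    (hge : ∀ i, ∑ x ∈ Xs, w₂ x i ≤ ∑ x ∈ Xs, w₁ x i)
    (hneq : (∑ x ∈ Xs, w₁ x) ≠ (∑ x ∈ Xs, w₂ x)) :
    ¬ ∃ φ : X → Y, (∀ x ∈ Xs, φ x = φ' x) ∧ IsPBRBob g φ := by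
  rintro ⟨φ, hφ, u, hu, hmin⟩
  have hle : ∀ x ∈ Xs, ∑ i, u i * w₁ x i ≤ ∑ i, u i * w₂ x i := by
    intro x hx
    have h := hmin x (φ'' x)
    rw [hφ x hx, h₁ x hx, h₂ x hx] at h
    exact EReal.coe_le_coe_iff.mp h
  have hsum := Finset.sum_le_sum hle
  rw [Finset.sum_comm, Finset.sum_comm (s := Xs)] at hsum
  simp only [← Finset.mul_sum] at hsum
  obtain ⟨j, hj⟩ := Function.ne_iff.mp hneq
  simp only [Finset.sum_apply] at hj
  -- Positivity of `u j` makes the strict inequality at coordinate `j` survive weighting.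
  have hlt : ∑ i, u i * ∑ x ∈ Xs, w₂ x i < ∑ i, u i * ∑ x ∈ Xs, w₁ x i :=
    Finset.sum_lt_sum (fun i _ => mul_le_mul_of_nonneg_left (hge i) (hu i).le)
      ⟨j, Finset.mem_univ j,
        mul_lt_mul_of_pos_left (lt_of_le_of_ne (hge j) (Ne.symm hj)) (hu j)⟩
  exact absurd hsum (not_le.mpr hlt)
end

section
/- Let g⁺_v be a v⁺-form, X* ⊆ X a subset with |X*| ≥ 2, and φ', φ'' : X* → Y two mappings such that all 2|X*| vectors {g⁺_v(x, φ'(x)), g⁺_v(x, φ''(x)) : x ∈ X*} lie in W and are pairwise distinct. If ∑_{x ∈ X*} g⁺_v(x, φ'(x)) = ∑_{x ∈ X*} g⁺_v(x, φ''(x)), then neither φ' nor φ'' can be extended to a possibly best response φ : X → Y of Bob that admits a witness cost vector u^B under which, for each x ∈ X, the best-response vector g⁺_v(x, φ(x)) is the unique cost-minimizing element of the support {g⁺_v(x,y) : y ∈ Y}. -/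
/-- `φ : X → Y` is a PBR of Bob with a witness cost vector under which each best-response
vector is the *unique* cost-minimizer in its support. -/
def IsStrictPBRBob {X Y : Type*} {m : ℕ}
    (g : X → Y → Option (Fin m → ℝ)) (φ : X → Y) : Prop :=
  ∃ u : Fin m → ℝ, (∀ i, 0 < u i) ∧
    (∀ (x : X) (y : Y), effCost u (g x (φ x)) ≤ effCost u (g x y)) ∧
    (∀ (x : X) (y : Y), g x y ≠ g x (φ x) → effCost u (g x (φ x)) < effCost u (g x y))

/-- A mapping `α` has no strict extension as soon as some `β` has a different vector in each
row of a nonempty subset and the same vector sum over it. -/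
theorem no_strict_extension_of_sum_eq {X Y : Type*} {m : ℕ}
    (g : X → Y → Option (Fin m → ℝ)) (Xs : Finset X) (hne : Xs.Nonempty)
    (α β : X → Y) (a b : X → Fin m → ℝ)
    (ha : ∀ x ∈ Xs, g x (α x) = some (a x))
    (hb : ∀ x ∈ Xs, g x (β x) = some (b x))
    (hab : ∀ x ∈ Xs, a x ≠ b x)
    (hsum : (∑ x ∈ Xs, a x) = (∑ x ∈ Xs, b x)) :
    ¬ ∃ φ : X → Y, (∀ x ∈ Xs, φ x = α x) ∧ IsStrictPBRBob g φ := by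
  rintro ⟨φ, hφ, u, -, -, hstrict⟩
  have hlt : ∀ x ∈ Xs, u ⬝ᵥ a x < u ⬝ᵥ b x := by
    intro x hx
    have h := hstrict x (β x)
    rw [hφ x hx, ha x hx, hb x hx] at h
    have h' := h fun e => hab x hx (Option.some.inj e).symm
    exact EReal.coe_lt_coe_iff.mp h'
  have hs := Finset.sum_lt_sum_of_nonempty hne hlt
  rw [← dotProduct_sum, ← dotProduct_sum, hsum] at hs
  exact lt_irrefl _ hs

/-- Summability condition (equality case): if `|X*| ≥ 2`, all `2|X*|` vector values of
`φ'` and `φ''` on `X*` are pairwise distinct, and the two coordinatewise sums are equal,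
then neither `φ'` nor `φ''` extends to a PBR of Bob admitting a witness cost vector with
unique best responses. -/
theorem not_extendable_to_strictPBR_of_sum_eq
    {X Y : Type*} {m : ℕ} [Fintype X] [Fintype Y] [Nonempty X] [Nonempty Y]
    (g : X → Y → Option (Fin m → ℝ)) (hform : IsVPlusForm g)
    (Xs : Finset X) (hcard : 2 ≤ Xs.card)
    (φ' φ'' : X → Y) (w₁ w₂ : X → Fin m → ℝ)
    (h₁ : ∀ x ∈ Xs, g x (φ' x) = some (w₁ x))
    (h₂ : ∀ x ∈ Xs, g x (φ'' x) = some (w₂ x))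
    (hdist : ∀ x ∈ Xs, ∀ x' ∈ Xs,
      (w₁ x = w₁ x' → x = x') ∧ (w₂ x = w₂ x' → x = x') ∧ w₁ x ≠ w₂ x')
    (hsum : (∑ x ∈ Xs, w₁ x) = (∑ x ∈ Xs, w₂ x)) :
    (¬ ∃ φ : X → Y, (∀ x ∈ Xs, φ x = φ' x) ∧ IsStrictPBRBob g φ) ∧
    (¬ ∃ φ : X → Y, (∀ x ∈ Xs, φ x = φ'' x) ∧ IsStrictPBRBob g φ) := by
  have hne : Xs.Nonempty := Finset.card_pos.mp (by omega)
  exact ⟨no_strict_extension_of_sum_eq g Xs hne φ' φ'' w₁ w₂ h₁ h₂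
      (fun x hx => (hdist x hx x hx).2.2) hsum,
    no_strict_extension_of_sum_eq g Xs hne φ'' φ' w₂ w₁ h₂ h₁
      (fun x hx => (hdist x hx x hx).2.2.symm) hsum.symm⟩
end

section
/- Let g : X × Y → O be a tight finite two-person game form and let r^A, r^B : O → ℝ be arbitrary reward functions (both players maximize). Then the game (g, r^A, r^B) has a Nash equilibrium (x,y) that is simple, i.e., g(x) ∩ g(y) = {g(x,y)}, and in which both strategies x and y are basic, i.e., no other strategy of the same player has a support that is a proper subset of theirs. -/
/-- Tightness as duality of the two families of supports. -/
theorem GameForm.Tight.support_subset_or {X Y O : Type*} {g : X → Y → O}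
    (h : GameForm.Tight g) (S : Set O) :
    (∃ x, (Set.range fun y => g x y) ⊆ S) ∨ ∃ y, (Set.range fun x => g x y) ⊆ Sᶜ := by
  by_contra hc
  simp only [Set.range_subset_iff, Set.mem_compl_iff] at hc
  push Not at hc
  obtain ⟨h₁, h₂⟩ := hc
  choose φ hφ using h₁
  choose ψ hψ using h₂
  obtain ⟨x, y, hxy⟩ := h φ ψ
  exact hφ x (hxy ▸ hψ y)

/-- If some member of a family of sets over a finite type lies in `S`, then so does some
inclusion-minimal member of the family. -/
theorem exists_basic_subset {X O : Type*} [Finite O] (f : X → Set O) {S : Set O}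
    (h : ∃ x, f x ⊆ S) : ∃ x, f x ⊆ S ∧ ∀ x', ¬ f x' ⊂ f x := by
  obtain ⟨x, hx, hmin⟩ := (InvImage.wf f (wellFounded_lt (α := Set O))).has_min {x | f x ⊆ S} h
  exact ⟨x, hx, fun x' hx' => hmin x' (hx'.subset.trans hx) hx'⟩

/-- The elimination process: `S` and `T` are the outcomes already moved, `U` the undecided ones.
The resulting outcome `o` is the one at which the process gets stuck. -/
theorem GameForm.Tight.exists_pivot {X Y O : Type*} {g : X → Y → O}
    (h : GameForm.Tight g) (rA rB : O → ℝ) (U : Finset O) :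
    ∀ S T : Set O, Disjoint S T → (∀ o, o ∈ U ↔ o ∉ S ∧ o ∉ T) →
      (∀ s ∈ S, ∀ u ∈ U, rB s ≤ rB u) → (∀ t ∈ T, ∀ u ∈ U, rA t ≤ rA u) →
      (¬ ∃ x, (Set.range fun y => g x y) ⊆ S) → (¬ ∃ y, (Set.range fun x => g x y) ⊆ T) →
      ∃ (o : O) (S' T' : Set O), Disjoint S' T' ∧
        (∀ s ∈ S', rB s ≤ rB o) ∧ (∀ t ∈ T', rA t ≤ rA o) ∧
        (∃ x, (Set.range fun y => g x y) ⊆ insert o S') ∧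
        ∃ y, (Set.range fun x => g x y) ⊆ insert o T' := by
  classical
  induction U using Finset.strongInduction with
  | H U ih =>
    intro S T hST hU hS hT hSl hTl
    have hne : U.Nonempty := by
      by_contra hemp
      rw [Finset.not_nonempty_iff_eq_empty] at hemp
      rcases h.support_subset_or S with hx | ⟨y, hy⟩
      · exact hSl hx
      · refine hTl ⟨y, hy.trans fun o ho => ?_⟩
        by_contra hoT
        have := (hU o).2 ⟨ho, hoT⟩
        simp [hemp] at this
    obtain ⟨a, haU, ha⟩ := U.exists_min_image rB hne
    obtain ⟨b, hbU, hb⟩ := U.exists_min_image rA hne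
    obtain ⟨haS, haT⟩ := (hU a).1 haU
    obtain ⟨hbS, hbT⟩ := (hU b).1 hbU
    by_cases hA : ∃ x, (Set.range fun y => g x y) ⊆ insert a S
    · by_cases hB : ∃ y, (Set.range fun x => g x y) ⊆ insert b T
      · have hab : a = b := by
          obtain ⟨x, hx⟩ := hA
          obtain ⟨y, hy⟩ := hB
          have h₁ := hx ⟨y, rfl⟩
          have h₂ := hy ⟨x, rfl⟩
          have hd := Set.disjoint_left.1 hST
          simp only [Set.mem_insert_iff] at h₁ h₂
          grind
        subst hab
        exact ⟨a, S, T, hST, fun s hs => hS s hs a haU, fun t ht => hT t ht a haU,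
          hA, hB⟩
      · refine ih (U.erase b) (Finset.erase_ssubset hbU) S (insert b T) ?_ ?_ ?_ ?_ hSl hB
        · exact Set.disjoint_insert_right.2 ⟨hbS, hST⟩
        · intro o
          simp only [Finset.mem_erase, Set.mem_insert_iff, hU]
          tauto
        · exact fun s hs u hu => hS s hs u (Finset.mem_of_mem_erase hu)
        · rintro t (rfl | ht) u hu
          · exact hb u (Finset.mem_of_mem_erase hu)
          · exact hT t ht u (Finset.mem_of_mem_erase hu)
    · refine ih (U.erase a) (Finset.erase_ssubset haU) (insert a S) T ?_ ?_ ?_ ?_ hA hTl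
      · exact Set.disjoint_insert_left.2 ⟨haT, hST⟩
      · intro o
        simp only [Finset.mem_erase, Set.mem_insert_iff, hU]
        tauto
      · rintro s (rfl | hs) u hu
        · exact ha u (Finset.mem_of_mem_erase hu)
        · exact hS s hs u (Finset.mem_of_mem_erase hu)
      · exact fun t ht u hu => hT t ht u (Finset.mem_of_mem_erase hu)

/-- Every game on a tight game form has a Nash equilibrium `(x, y)` that is simple
(`g(x) ∩ g(y) = {g(x,y)}`) and in which both strategies are basic (no other strategy of
the same player has a support that is a proper subset of theirs). -/
theorem exists_simple_basic_nashEq_of_tight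
    {X Y O : Type*} [Fintype X] [Fintype Y] [Fintype O] [Nonempty X] [Nonempty Y]
    (g : X → Y → O) (htight : GameForm.Tight g) (rA rB : O → ℝ) :
    ∃ (x : X) (y : Y),
      -- Nash equilibrium (both players maximize):
      (∀ x' : X, rA (g x' y) ≤ rA (g x y)) ∧
      (∀ y' : Y, rB (g x y') ≤ rB (g x y)) ∧
      -- the situation (x, y) is simple:
      ((Set.range fun y' => g x y') ∩ (Set.range fun x' => g x' y) = {g x y}) ∧
      -- x is a basic strategy of Alice:
      (∀ x' : X, ¬ (Set.range fun y' => g x' y') ⊂ (Set.range fun y' => g x y')) ∧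
      -- y is a basic strategy of Bob:
      (∀ y' : Y, ¬ (Set.range fun x' => g x' y') ⊂ (Set.range fun x' => g x' y)) := by
  obtain ⟨o, S, T, hST, hS, hT, hA, hB⟩ :=
    htight.exists_pivot rA rB Finset.univ ∅ ∅ (Set.disjoint_empty _) (by simp) (by simp) (by simp)
      (by simp [Set.range_eq_empty_iff]) (by simp [Set.range_eq_empty_iff])
  obtain ⟨x, hx, hxmin⟩ := exists_basic_subset (fun x => Set.range fun y => g x y) hA
  obtain ⟨y, hy, hymin⟩ := exists_basic_subset (fun y => Set.range fun x => g x y) hB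
  have hcap : ∀ p, p ∈ insert o S → p ∈ insert o T → p = o := by
    rintro p (h | hpS) (h | hpT)
    · exact h
    · exact h
    · exact h
    · exact (Set.disjoint_left.1 hST hpS hpT).elim
  have hxy : g x y = o := hcap _ (hx ⟨y, rfl⟩) (hy ⟨x, rfl⟩)
  refine ⟨x, y, fun x' => ?_, fun y' => ?_, ?_, hxmin, hymin⟩
  · rw [hxy]
    rcases hy ⟨x', rfl⟩ with h | h
    · exact (congrArg rA h).le
    · exact hT _ h
  · rw [hxy]
    rcases hx ⟨y', rfl⟩ with h | h
    · exact (congrArg rB h).le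
    · exact hS _ h
  · refine Set.Subset.antisymm (fun p hp => ?_) ?_
    · rw [hxy]
      exact hcap p (hx hp.1) (hy hp.2)
    · rintro _ rfl
      exact ⟨⟨y, rfl⟩, ⟨x, rfl⟩⟩
end
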